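/- arXiv:2308.06322 — 2 statements merged into one kernel-verified Lean document; each statement's English description precedes it below -/
import Mathlib

section
/- Fix a prime p and an integer k ≥ 1, and let Λ := 𝔽_p^ω = ⊕_{n∈ℕ} ℤ/pℤ. Let X be a compact metrizable space with a continuous action of Λ by homeomorphisms, and suppose (X, Λ) is transitive (some point has dense orbit) and topological Abramov of order at most k. Then there exist a filtered polynomial map f : Λ → H_{p,k} (with respect to the filtration of H_{p,k}) and a Λ-equivariant homeomorphism from X onto the orbit closure of f, i.e. the closure in (H_{p,k})^Λ (product topology, shift action of Λ) of the shift orbit {f(·+z) : z ∈ Λ}. -/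
variable {Λ G Y X : Type*}

/-- Difference operator: `dd h f x = f (x+h) - f x`. -/
def dd [Add Λ] [Sub G] (h : Λ) (f : Λ → G) : Λ → G := fun x => f (x + h) - f x

/-- Iterated difference operator along a list of shifts. -/
def dds [Add Λ] [Sub G] (hs : List Λ) (f : Λ → G) : Λ → G := hs.foldr dd f

/-- `f : Λ → G` is a filtered polynomial with respect to the filtration `Gf`. -/
def IsFilteredPoly [Add Λ] [AddCommGroup G] (Gf : ℕ → AddSubgroup G) (f : Λ → G) : Prop :=
  ∀ hs : List Λ, hs ≠ [] → ∀ x, dds hs f x ∈ Gf hs.length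

/-- The shift orbit of `f : Λ → G` inside `G^Λ`. -/
def orbit' [Add Λ] (f : Λ → G) : Set (Λ → G) := {g : Λ → G | ∃ z : Λ, g = fun x => f (x + z)}

/-- Multiplicative derivative `Δ_z φ (y) = φ (z·y) * conj (φ y)` for an action `T`. -/
def pd (T : Λ → Y → Y) (z : Λ) (φ : Y → ℂ) : Y → ℂ :=
  fun y => φ (T z y) * (starRingEnd ℂ) (φ y)

/-- Iterated multiplicative derivative. -/
def pds (T : Λ → Y → Y) (zs : List Λ) (φ : Y → ℂ) : Y → ℂ := zs.foldr (pd T) φ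

/-- `φ` is a continuous phase polynomial of degree at most `k` for the action `T` on `Y`. -/
def IsPhasePoly [TopologicalSpace Y] (T : Λ → Y → Y) (k : ℕ) (φ : Y → ℂ) : Prop :=
  Continuous φ ∧ ∀ zs : List Λ, zs.length = k + 1 → ∀ y, pds T zs φ y = 1

/-- Discrete topology on `ZMod n` (each factor of `H_{p,k}` is a finite group). -/
instance ZMod.topologicalSpace' (n : ℕ) : TopologicalSpace (ZMod n) := ⊥

/-- The cyclic group `G^{(ℓ)} = ℤ/p^{j_ℓ}ℤ` with `j_ℓ = ⌊(k−ℓ)/(p−1)⌋ + 1`, where the index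
`ℓ : Fin k` represents `ℓ+1 ∈ {1, …, k}`. -/
abbrev Hfactor (p k : ℕ) (ℓ : Fin k) : Type := ZMod (p ^ ((k - (ℓ.1 + 1)) / (p - 1) + 1))

/-- The compact abelian group `H_{p,k} = ∏_{ℓ=1}^{k} (G^{(ℓ)})^ℕ` with the product topology. -/
abbrev Hpk (p k : ℕ) : Type := (ℓ : Fin k) → ℕ → Hfactor p k ℓ

/-- The subgroup `G^{(ℓ)}_{(i)}`: all of `G^{(ℓ)}` for `i ≤ ℓ`, and
`p^{⌊(i−ℓ−1)/(p−1)⌋+1}·G^{(ℓ)}` for `i > ℓ`. -/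
def HfactorFilt (p k : ℕ) (ℓ : Fin k) (i : ℕ) : AddSubgroup (Hfactor p k ℓ) :=
  if i ≤ ℓ.1 + 1 then ⊤
  else AddSubgroup.zmultiples ((p : Hfactor p k ℓ) ^ ((i - (ℓ.1 + 1) - 1) / (p - 1) + 1))

/-- The degree-`k` filtration `(H_{p,k})_{(i)} = ∏_{ℓ=1}^{k} (G^{(ℓ)}_{(i)})^ℕ` on `H_{p,k}`. -/
def HpkFilt (p k : ℕ) (i : ℕ) : AddSubgroup (Hpk p k) :=
  AddSubgroup.pi Set.univ fun ℓ => AddSubgroup.pi Set.univ fun _ : ℕ => HfactorFilt p k ℓ i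

/-!
Evaluated along the dense orbit, a phase polynomial of degree at most `k` becomes a polynomial map
`F` of degree at most `k` from an elementary abelian `p`-group to the circle. Expanding
`F (x + p • h) = F x` in iterated differences shows that multiplying `F` by `p` lowers its degree
by `p - 1`, as long as the degree stays nonnegative. Hence `p ^ s • F` is constant as soon as
`k ≤ s * (p - 1)`, and by density the whole phase polynomial takes values in a coset of the
`p ^ s`-th roots of unity, that is, it is coded by a continuous `ZMod (p ^ s)`-valued function.

Only one of the factors of `H_{p,k}` is needed: for the `ℓ ∈ {1, …, p - 1}` congruent to `k` modulo
`p - 1` one has `k ≤ j_ℓ * (p - 1)`, and the same loss of degree shows that every polynomial map of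
degree at most `k` into `G^{(ℓ)}` is filtered. Countably many phase polynomials separate the points
of `X`, so their codes embed `X` into `(G^{(ℓ)})^ℕ`, and reading the codes along orbits is the
required conjugacy.
-/

section Differences

lemma dds_cons [Add Λ] [Sub G] (h : Λ) (hs : List Λ) (f : Λ → G) :
    dds (h :: hs) f = dd h (dds hs f) := rfl

lemma dds_concat [Add Λ] [Sub G] (hs : List Λ) (h : Λ) (f : Λ → G) :
    dds (hs ++ [h]) f = dds hs (dd h f) := by
  simp only [dds, List.foldr_append, List.foldr_cons, List.foldr_nil]

lemma dds_replicate [Add Λ] [Sub G] (m : ℕ) (h : Λ) (f : Λ → G) :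
    dds (List.replicate m h) f = (dd h)^[m] f := by
  induction m with
  | zero => rfl
  | succ m ih => rw [List.replicate_succ, dds_cons, ih, Function.iterate_succ_apply']

lemma dd_zero [Add Λ] [AddGroup G] (h : Λ) : dd h (0 : Λ → G) = 0 :=
  funext fun _ => sub_self 0

lemma dds_zero [Add Λ] [AddGroup G] (hs : List Λ) : dds hs (0 : Λ → G) = 0 := by
  induction hs with
  | nil => rfl
  | cons h hs ih => rw [dds_cons, ih, dd_zero]

lemma dd_sub_const [Add Λ] [AddGroup G] (h : Λ) (f : Λ → G) (c : G) :
    dd h (fun x => f x - c) = dd h f :=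
  funext fun _ => sub_sub_sub_cancel_right _ _ _

lemma dds_map [Add Λ] [AddGroup G] {G' : Type*} [AddGroup G'] (φ : G →+ G') (hs : List Λ)
    (f : Λ → G) (x : Λ) : dds hs (fun y => φ (f y)) x = φ (dds hs f x) := by
  induction hs generalizing x with
  | nil => rfl
  | cons h hs ih => simp only [dds_cons, dd, ih, map_sub]

lemma dds_nsmul [Add Λ] [AddCommGroup G] (n : ℕ) (hs : List Λ) (f : Λ → G) :
    dds hs (n • f) = n • dds hs f :=
  funext fun x => dds_map (nsmulAddMonoidHom n) hs f x

lemma dd_nsmul [Add Λ] [AddCommGroup G] (n : ℕ) (h : Λ) (f : Λ → G) :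
    dd h (n • f) = n • dd h f :=
  dds_nsmul n [h] f

end Differences

section Polynomials

/-- Polynomial maps of degree at most `d` between abelian groups, without reference to a
filtration: all differences of order exactly `d + 1` vanish (see
`IsPolyOfDegreeLE.dds_eq_zero` for those of higher order). -/
def IsPolyOfDegreeLE [Add Λ] [AddGroup G] (d : ℕ) (f : Λ → G) : Prop :=
  ∀ hs : List Λ, hs.length = d + 1 → dds hs f = 0

lemma isPolyOfDegreeLE_zero_iff [Add Λ] [AddGroup G] {f : Λ → G} :
    IsPolyOfDegreeLE 0 f ↔ ∀ h, dd h f = 0 := by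
  refine ⟨fun hf h => hf [h] rfl, fun hf hs hlen => ?_⟩
  obtain ⟨h, rfl⟩ := List.length_eq_one_iff.1 hlen
  exact hf h

lemma isPolyOfDegreeLE_succ_iff [Add Λ] [AddGroup G] {d : ℕ} {f : Λ → G} :
    IsPolyOfDegreeLE (d + 1) f ↔ ∀ h, IsPolyOfDegreeLE d (dd h f) := by
  refine ⟨fun hf h hs hlen => ?_, fun hf hs hlen => ?_⟩
  · rw [← dds_concat]
    exact hf _ (by rw [List.length_append, hlen, List.length_singleton])
  · obtain rfl | ⟨hs, h, rfl⟩ := List.eq_nil_or_concat' hs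
    · simp at hlen
    · rw [dds_concat]
      exact hf h hs (by simpa using hlen)

namespace IsPolyOfDegreeLE

lemma dds_eq_zero [Add Λ] [AddGroup G] {d : ℕ} {f : Λ → G} (hf : IsPolyOfDegreeLE d f)
    {hs : List Λ} (hlen : d < hs.length) : dds hs f = 0 := by
  induction hs with
  | nil => simp at hlen
  | cons h hs ih =>
    obtain hlen' | hlen' := (Nat.le_of_lt_succ hlen).eq_or_lt
    · exact hf _ (by rw [List.length_cons, hlen'])
    · rw [dds_cons, ih hlen', dd_zero]

lemma sub_const [Add Λ] [AddGroup G] {d : ℕ} {f : Λ → G} (hf : IsPolyOfDegreeLE d f) (c : G) :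
    IsPolyOfDegreeLE d fun x => f x - c := by
  cases d with
  | zero => simpa only [isPolyOfDegreeLE_zero_iff, dd_sub_const] using hf
  | succ d => simpa only [isPolyOfDegreeLE_succ_iff, dd_sub_const] using hf

lemma of_map_injective [Add Λ] [AddGroup G] {G' : Type*} [AddGroup G'] {φ : G →+ G'}
    (hφ : Function.Injective φ) {d : ℕ} {f : Λ → G}
    (hf : IsPolyOfDegreeLE d fun x => φ (f x)) : IsPolyOfDegreeLE d f := by
  refine fun hs hlen => funext fun x => hφ ?_
  rw [← dds_map, hf hs hlen, Pi.zero_apply, Pi.zero_apply, map_zero]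

lemma nsmul [Add Λ] [AddCommGroup G] {d : ℕ} {f : Λ → G} (hf : IsPolyOfDegreeLE d f) (n : ℕ) :
    IsPolyOfDegreeLE d (n • f) := fun hs hlen => by
  rw [dds_nsmul, hf hs hlen, smul_zero]

end IsPolyOfDegreeLE

variable [AddCommMonoid Λ] [AddCommGroup G] {p : ℕ}

/-- Writing `D` for `dd h`, the relation `(1 + D) ^ p = 1` reads
`∑ 1 ≤ m ≤ p, p.choose m • D ^ m = 0`, and only the term `m = 1` survives on `f`. -/
lemma nsmul_dd_eq_zero (hp : p.Prime) {h : Λ} (hh : p • h = 0) {f : Λ → G}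
    (hf₂ : p • dd h (dd h f) = 0) (hfp : (dd h)^[p] f = 0) : p • dd h f = 0 := by
  have higher_terms (m : ℕ) (hm : m + 2 ≤ p) : p.choose (m + 2) • (dd h)^[m + 2] f = 0 := by
    obtain rfl | hlt := hm.eq_or_lt
    · rw [hfp, smul_zero]
    · obtain ⟨c, hc⟩ := hp.dvd_choose_self (by lia) hlt
      rw [hc, mul_comm, mul_smul, Function.iterate_add_apply, ← dds_replicate, ← dds_nsmul]
      rw [show p • (dd h)^[2] f = 0 from hf₂, dds_zero, smul_zero]
  funext x
  have expansion : f (x + p • h) = ∑ m ∈ Finset.range (p + 1), p.choose m • (dd h)^[m] f x :=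
    shift_eq_sum_fwdDiff_iter h f p x
  obtain ⟨q, rfl⟩ : ∃ q, p = q + 1 := ⟨p - 1, by have := hp.pos; lia⟩
  have tail_sum : ∑ m ∈ Finset.range q, (q + 1).choose (m + 1 + 1) • (dd h)^[m + 1 + 1] f x = 0 :=
    Finset.sum_eq_zero fun m hm =>
      congrFun (higher_terms m (Nat.succ_le_succ (Finset.mem_range.1 hm))) x
  rw [hh, add_zero, Finset.sum_range_succ', Finset.sum_range_succ', tail_sum] at expansion
  simpa using expansion

namespace IsPolyOfDegreeLE

variable {d : ℕ} {f : Λ → G}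

/-- The truncated subtraction is intended: for `d < p - 1` too the map `p • f` is constant. -/
lemma prime_nsmul (hp : p.Prime) (hΛ : ∀ h : Λ, p • h = 0) (hf : IsPolyOfDegreeLE d f) :
    IsPolyOfDegreeLE (d - (p - 1)) (p • f) := by
  induction d generalizing f with
  | zero => simpa only [Nat.zero_sub] using hf.nsmul p
  | succ d ih =>
    have hdf (h : Λ) : IsPolyOfDegreeLE (d - (p - 1)) (p • dd h f) :=
      ih (isPolyOfDegreeLE_succ_iff.1 hf h)
    obtain hd | hd := le_or_gt (p - 1) d
    · rw [Nat.sub_add_comm hd, isPolyOfDegreeLE_succ_iff]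
      exact fun h => dd_nsmul p h f ▸ hdf h
    · rw [Nat.sub_eq_zero_of_le hd.le] at hdf
      rw [Nat.sub_eq_zero_of_le hd, isPolyOfDegreeLE_zero_iff]
      intro h
      rw [dd_nsmul]
      refine nsmul_dd_eq_zero hp (hΛ h) ?_ ?_
      · rw [← dd_nsmul]
        exact isPolyOfDegreeLE_zero_iff.1 (hdf h) h
      · rw [← dds_replicate]
        exact hf.dds_eq_zero (by rw [List.length_replicate]; lia)

lemma prime_pow_nsmul (hp : p.Prime) (hΛ : ∀ h : Λ, p • h = 0) (hf : IsPolyOfDegreeLE d f)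
    (s : ℕ) : IsPolyOfDegreeLE (d - s * (p - 1)) (p ^ s • f) := by
  induction s with
  | zero => simpa only [zero_mul, Nat.sub_zero, pow_zero, one_smul] using hf
  | succ s ih =>
    rw [Nat.succ_mul, ← Nat.sub_sub, pow_succ', mul_smul]
    exact ih.prime_nsmul hp hΛ

lemma prime_pow_nsmul_apply_eq (hp : p.Prime) (hΛ : ∀ h : Λ, p • h = 0)
    (hf : IsPolyOfDegreeLE d f) {s : ℕ} (hs : d ≤ s * (p - 1)) (x : Λ) :
    p ^ s • f x = p ^ s • f 0 := by
  have hconst := hf.prime_pow_nsmul hp hΛ s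
  rw [Nat.sub_eq_zero_of_le hs, isPolyOfDegreeLE_zero_iff] at hconst
  simpa only [dd, zero_add, Pi.zero_apply, Pi.smul_apply, sub_eq_zero] using congrFun (hconst x) 0

end IsPolyOfDegreeLE

end Polynomials

section Filtrations

lemma isFilteredPoly_zero [Add Λ] [AddCommGroup G] (Gf : ℕ → AddSubgroup G) :
    IsFilteredPoly Gf (0 : Λ → G) := fun hs _ _ => by
  rw [dds_zero]
  exact zero_mem _

lemma isFilteredPoly_pi_iff [Add Λ] {ι : Type*} {A : ι → Type*} [∀ j, AddCommGroup (A j)]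
    {Af : ∀ j, ℕ → AddSubgroup (A j)} {f : Λ → ∀ j, A j} :
    IsFilteredPoly (fun i => AddSubgroup.pi Set.univ fun j => Af j i) f ↔
      ∀ j, IsFilteredPoly (Af j) fun x => f x j := by
  have dds_apply (j : ι) (hs : List Λ) (x : Λ) : dds hs (fun y => f y j) x = dds hs f x j :=
    dds_map (Pi.evalAddMonoidHom A j) hs f x
  simp only [IsFilteredPoly, AddSubgroup.mem_pi, Set.mem_univ, true_imp_iff, dds_apply]
  exact ⟨fun hf j hs hne x => hf hs hne x j, fun hf hs hne x j => hf j hs hne x⟩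

lemma isFilteredPoly_HpkFilt_iff [Add Λ] {p k : ℕ} {f : Λ → Hpk p k} :
    IsFilteredPoly (HpkFilt p k) f ↔
      ∀ ℓ n, IsFilteredPoly (HfactorFilt p k ℓ) fun x => f x ℓ n :=
  isFilteredPoly_pi_iff.trans (forall_congr' fun _ => isFilteredPoly_pi_iff)

lemma mem_zmultiples_pow_of_pow_nsmul_eq_zero {p : ℕ} (hp : p ≠ 0) {j t : ℕ} {a : ZMod (p ^ j)}
    (ha : p ^ (j - t) • a = 0) : a ∈ AddSubgroup.zmultiples ((p : ZMod (p ^ j)) ^ t) := by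
  obtain hjt | htj := le_total j t
  · rw [Nat.sub_eq_zero_of_le hjt, pow_zero, one_smul] at ha
    exact ha ▸ zero_mem _
  obtain ⟨b, rfl⟩ := ZMod.intCast_surjective a
  have hdvd : (p : ℤ) ^ t ∣ b := by
    rw [nsmul_eq_mul, ← Int.cast_natCast, ← Int.cast_mul, ZMod.intCast_zmod_eq_zero_iff_dvd,
      Nat.cast_pow, Nat.cast_pow, ← pow_sub_mul_pow _ htj] at ha
    exact Int.dvd_of_mul_dvd_mul_left (pow_ne_zero _ (Nat.cast_ne_zero.2 hp)) ha
  obtain ⟨c, rfl⟩ := hdvd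
  exact AddSubgroup.mem_zmultiples_iff.2 ⟨c, by push_cast; rw [zsmul_eq_mul, mul_comm]⟩

lemma IsPolyOfDegreeLE.isFilteredPoly_HfactorFilt [AddCommMonoid Λ] {p k : ℕ} (hp : p.Prime)
    (hΛ : ∀ h : Λ, p • h = 0) {ℓ : Fin k} (hℓ : p - 1 ∣ k - (ℓ.1 + 1))
    {f : Λ → Hfactor p k ℓ} (hf : IsPolyOfDegreeLE k f) :
    IsFilteredPoly (HfactorFilt p k ℓ) f := by
  intro hs _ x
  unfold HfactorFilt
  split_ifs with hlen
  · trivial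
  apply mem_zmultiples_pow_of_pow_nsmul_eq_zero hp.ne_zero
  rw [← Pi.smul_apply, ← dds_nsmul, (hf.prime_pow_nsmul hp hΛ _).dds_eq_zero, Pi.zero_apply]
  set J := (k - (ℓ.1 + 1)) / (p - 1)
  set t := (hs.length - (ℓ.1 + 1) - 1) / (p - 1)
  have hk : J * (p - 1) = k - (ℓ.1 + 1) := Nat.div_mul_cancel hℓ
  have htp : t * (p - 1) ≤ hs.length - (ℓ.1 + 1) - 1 := Nat.div_mul_le_self _ _
  rw [Nat.add_sub_add_right, Nat.sub_mul, hk]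
  lia

end Filtrations

section CircleCodes

instance (n : ℕ) : DiscreteTopology (ZMod n) := ⟨rfl⟩

lemma exists_toCircle_eq_of_pow_eq_one {N : ℕ} [NeZero N] {c : Circle} (hc : c ^ N = 1) :
    ∃ a : ZMod N, ZMod.toCircle a = c := by
  obtain ⟨a, ha⟩ := (bijective_rootsOfUnityAddChar N).surjective (rootsOfUnity.mkOfPowEq c hc)
  exact ⟨a, by simpa using congrArg (fun w => (w.1 : Circle)) ha⟩

variable [TopologicalSpace X]

lemma exists_continuous_toCircle_eq {N : ℕ} [NeZero N] {ψ : X → Circle} (hψ : Continuous ψ)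
    (hroot : ∀ x, ψ x ^ N = 1) :
    ∃ u : X → ZMod N, Continuous u ∧ ∀ x, ZMod.toCircle (u x) = ψ x := by
  choose u hu using fun x => exists_toCircle_eq_of_pow_eq_one (hroot x)
  have hemb : Topology.IsClosedEmbedding (ZMod.toCircle : ZMod N → Circle) :=
    continuous_of_discreteTopology.isClosedEmbedding ZMod.injective_toCircle
  refine ⟨u, ?_, hu⟩
  rw [hemb.continuous_iff, show ZMod.toCircle ∘ u = ψ from funext hu]
  exact hψ

lemma exists_continuous_zmod_code [AddCommMonoid Λ] {p : ℕ} (hp : p.Prime) (hΛ : ∀ h : Λ, p • h = 0)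
    {o : Λ → X} (ho : DenseRange o) {ψ : X → Circle} (hψ : Continuous ψ) {d s : ℕ}
    (hdeg : IsPolyOfDegreeLE d fun z => Additive.ofMul (ψ (o z))) (hs : d ≤ s * (p - 1)) :
    ∃ u : X → ZMod (p ^ s), Continuous u ∧ (∀ x y, u x = u y → ψ x = ψ y) ∧
      IsPolyOfDegreeLE d fun z => u (o z) := by
  have : NeZero (p ^ s) := ⟨pow_ne_zero s hp.ne_zero⟩
  have hroot_orbit (z : Λ) : ψ (o z) ^ p ^ s = ψ (o 0) ^ p ^ s :=
    Additive.ofMul.injective (hdeg.prime_pow_nsmul_apply_eq hp hΛ hs z)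
  have hroot (x : X) : ψ x ^ p ^ s = ψ (o 0) ^ p ^ s :=
    congrFun (ho.equalizer (hψ.pow _) continuous_const (funext hroot_orbit)) x
  obtain ⟨u, hu_cont, hu⟩ := exists_continuous_toCircle_eq (N := p ^ s) (hψ.div_const (ψ (o 0)))
    fun x => by rw [div_pow, hroot, div_self']
  refine ⟨u, hu_cont, fun x y hxy => div_left_injective (b := ψ (o 0)) ?_,
    .of_map_injective (φ := ZMod.toCircle.toAddMonoidHom) ?_ ?_⟩
  · exact (hu x).symm.trans (hxy ▸ hu y)
  · exact Additive.ofMul.injective.comp ZMod.injective_toCircle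
  · simpa only [AddChar.toAddMonoidHom_apply, hu, ofMul_div] using
      hdeg.sub_const (Additive.ofMul (ψ (o 0)))

end CircleCodes

section PhasePolynomials

lemma pds_cons (T : Λ → X → X) (z : Λ) (zs : List Λ) (φ : X → ℂ) :
    pds T (z :: zs) φ = pd T z (pds T zs φ) := rfl

lemma pds_one (T : Λ → X → X) (zs : List Λ) : pds T zs 1 = 1 := by
  induction zs with
  | nil => rfl
  | cons z zs ih =>
    funext x
    simp only [pds_cons, ih, pd, Pi.one_apply, map_one, mul_one]

lemma norm_pds_replicate_zero [Zero Λ] {T : Λ → X → X} (hT0 : ∀ x, T 0 x = x) (φ : X → ℂ)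
    (m : ℕ) (x : X) : ‖pds T (List.replicate m 0) φ x‖ = ‖φ x‖ ^ 2 ^ m := by
  induction m with
  | zero => rw [pow_zero, pow_one]; rfl
  | succ m ih =>
    rw [List.replicate_succ, pds_cons, pd, hT0, norm_mul, RCLike.norm_conj, ih, pow_succ 2 m,
      pow_mul, sq]

lemma coe_dds_orbit_eq_pds [AddCommMagma Λ] {T : Λ → X → X}
    (hTadd : ∀ z w x, T (z + w) x = T z (T w x)) (ψ : X → Circle) (x : X) (hs : List Λ) (w : Λ) :
    ((dds hs (fun z => Additive.ofMul (ψ (T z x))) w).toMul : ℂ) =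
      pds T hs (fun y => (ψ y : ℂ)) (T w x) := by
  induction hs generalizing w with
  | nil => rfl
  | cons h hs ih =>
    rw [dds_cons, pds_cons, dd, pd, toMul_sub, div_eq_mul_inv, Circle.coe_mul,
      Circle.coe_inv_eq_conj, ih, ih, ← hTadd, add_comm]

variable [TopologicalSpace X] {T : Λ → X → X} {k : ℕ}

lemma isPhasePoly_one : IsPhasePoly T k (1 : X → ℂ) :=
  ⟨continuous_const, fun zs _ x => congrFun (pds_one T zs) x⟩

namespace IsPhasePoly

variable {φ : X → ℂ}

lemma norm_eq_one [Zero Λ] (hT0 : ∀ x, T 0 x = x) (hφ : IsPhasePoly T k φ) (x : X) :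
    ‖φ x‖ = 1 := by
  have h := norm_pds_replicate_zero hT0 φ (k + 1) x
  rw [hφ.2 _ List.length_replicate, norm_one] at h
  exact (pow_eq_one_iff_of_nonneg (norm_nonneg _) (by positivity)).1 h.symm

lemma exists_circle_lift [Zero Λ] (hT0 : ∀ x, T 0 x = x) (hφ : IsPhasePoly T k φ) :
    ∃ ψ : X → Circle, Continuous ψ ∧ ∀ x, (ψ x : ℂ) = φ x :=
  ⟨fun x => ⟨φ x, mem_sphere_zero_iff_norm.2 (hφ.norm_eq_one hT0 x)⟩, hφ.1.subtype_mk _,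
    fun _ => rfl⟩

lemma isPolyOfDegreeLE_orbit [AddCommMagma Λ] (hTadd : ∀ z w x, T (z + w) x = T z (T w x))
    {ψ : X → Circle} (hψ : IsPhasePoly T k fun x => (ψ x : ℂ)) (x : X) :
    IsPolyOfDegreeLE k fun z => Additive.ofMul (ψ (T z x)) := by
  refine fun hs hlen => funext fun w => Additive.toMul.injective (Circle.ext ?_)
  rw [coe_dds_orbit_eq_pds hTadd, hψ.2 hs hlen]
  rfl

lemma exists_Hfactor_code [AddCommMonoid Λ] {p : ℕ} (hp : p.Prime) (hΛ : ∀ h : Λ, p • h = 0)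
    (hT0 : ∀ x, T 0 x = x) (hTadd : ∀ z w x, T (z + w) x = T z (T w x)) {x₀ : X}
    (hx₀ : DenseRange fun z => T z x₀) {ℓ : Fin k} (hℓ_le : ℓ.1 + 1 ≤ p - 1)
    (hℓ_dvd : p - 1 ∣ k - (ℓ.1 + 1)) (hφ : IsPhasePoly T k φ) :
    ∃ u : X → Hfactor p k ℓ, Continuous u ∧ (∀ x y, u x = u y → φ x = φ y) ∧
      IsFilteredPoly (HfactorFilt p k ℓ) fun z => u (T z x₀) := by
  obtain ⟨ψ, hψ_cont, hψφ⟩ := hφ.exists_circle_lift hT0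
  obtain rfl : (fun x => (ψ x : ℂ)) = φ := funext hψφ
  have hk : k ≤ ((k - (ℓ.1 + 1)) / (p - 1) + 1) * (p - 1) := by
    rw [Nat.succ_mul, Nat.div_mul_cancel hℓ_dvd]
    lia
  obtain ⟨u, hu_cont, hu_sep, hu_poly⟩ :=
    exists_continuous_zmod_code hp hΛ hx₀ hψ_cont (hφ.isPolyOfDegreeLE_orbit hTadd x₀) hk
  exact ⟨u, hu_cont, fun x y hxy => congrArg _ (hu_sep x y hxy),
    hu_poly.isFilteredPoly_HfactorFilt hp hΛ hℓ_dvd⟩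

end IsPhasePoly

end PhasePolynomials

section Separation

variable [TopologicalSpace X] [CompactSpace X]

lemma eq_of_dense_span_of_forall_eq [T2Space X] {S : Set C(X, ℂ)}
    (hS : Dense (Submodule.span ℂ S : Set C(X, ℂ))) {x y : X} (hxy : ∀ ψ ∈ S, ψ x = ψ y) :
    x = y := by
  have hspan : Set.EqOn (fun g : C(X, ℂ) => g x) (fun g => g y) (Submodule.span ℂ S) :=
    LinearMap.eqOn_span (f := (ContinuousMap.evalCLM ℂ x : C(X, ℂ) →L[ℂ] ℂ).toLinearMap)
      (g := (ContinuousMap.evalCLM ℂ y).toLinearMap) hxy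
  have hall := Continuous.ext_on hS (continuous_eval_const x) (continuous_eval_const y) hspan
  by_contra hne
  obtain ⟨f, hf, hfxy⟩ := separatesPoints_continuous_of_t35Space hne
  let g : C(X, ℂ) := ⟨fun z => (f z : ℂ), Complex.continuous_ofReal.comp hf⟩
  exact hfxy (Complex.ofReal_injective (congrFun hall g))

lemma exists_seq_mem_separating [TopologicalSpace.MetrizableSpace X] {S : Set C(X, ℂ)}
    (hne : S.Nonempty) (hS : Dense (Submodule.span ℂ S : Set C(X, ℂ))) :
    ∃ φ : ℕ → C(X, ℂ), (∀ n, φ n ∈ S) ∧ ∀ x y, (∀ n, φ n x = φ n y) → x = y := by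
  let := TopologicalSpace.metrizableSpaceMetric X
  have : Nonempty S := hne.to_subtype
  refine ⟨fun n => TopologicalSpace.denseSeq S n, fun n => Subtype.property _,
    fun x y hxy => eq_of_dense_span_of_forall_eq hS fun ψ hψ => ?_⟩
  have eval_continuous (z : X) : Continuous fun ψ : S => (ψ : C(X, ℂ)) z :=
    (continuous_eval_const z).comp continuous_subtype_val
  exact congrFun ((TopologicalSpace.denseRange_denseSeq S).equalizer (eval_continuous x)
    (eval_continuous y) (funext hxy)) ⟨ψ, hψ⟩

lemma dense_of_forall_exists_norm_sub_lt {S : Set C(X, ℂ)}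
    (hS : ∀ (h : C(X, ℂ)) (ε : ℝ), 0 < ε → ∃ g ∈ S, ∀ x, ‖h x - g x‖ < ε) : Dense S := by
  refine Metric.dense_iff.2 fun h ε hε => ?_
  obtain ⟨g, hg, hlt⟩ := hS h ε hε
  refine ⟨g, ?_, hg⟩
  rw [Metric.mem_ball', ContinuousMap.dist_lt_iff hε]
  exact fun x => dist_eq_norm (h x) (g x) ▸ hlt x

end Separation

section Conjugacy

variable [TopologicalSpace X] [CompactSpace X] {T : Λ → X → X}

lemma exists_homeomorph_closure_orbit [Add Λ] [TopologicalSpace G] [T2Space G]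
    (hTcont : ∀ z, Continuous (T z)) (hTadd : ∀ z w x, T (z + w) x = T z (T w x))
    {u : X → G} (hu : Continuous u) (hinj : Function.Injective fun x (w : Λ) => u (T w x))
    {x₀ : X} (hx₀ : DenseRange fun z => T z x₀) :
    ∃ e : X ≃ₜ closure (orbit' fun z => u (T z x₀)),
      ∀ z x, (e (T z x) : Λ → G) = fun w => (e x : Λ → G) (w + z) := by
  let E : X → Λ → G := fun x w => u (T w x)
  have hE : Topology.IsClosedEmbedding E :=
    (continuous_pi fun w => hu.comp (hTcont w)).isClosedEmbedding hinj
  have equivariant (z : Λ) (x : X) : E (T z x) = fun w => E x (w + z) :=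
    funext fun w => congrArg u (hTadd w z x).symm
  have orbit_eq : orbit' (E x₀) = E '' Set.range fun z => T z x₀ := by
    ext g
    simp only [orbit', Set.mem_ofPred_eq, Set.mem_image, Set.exists_range_iff, equivariant, eq_comm]
  have range_eq : Set.range E = closure (orbit' (E x₀)) := by
    rw [orbit_eq, hE.closure_image_eq, hx₀.closure_range, Set.image_univ]
  exact ⟨hE.isEmbedding.toHomeomorph.trans (.setCongr range_eq), equivariant⟩

lemma exists_fin_succ_le_and_dvd_sub {k m : ℕ} (hk : 0 < k) (hm : 0 < m) :
    ∃ ℓ : Fin k, ℓ.1 + 1 ≤ m ∧ m ∣ k - (ℓ.1 + 1) := by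
  refine ⟨⟨(k - 1) % m, (Nat.mod_le _ _).trans_lt (Nat.sub_one_lt_of_lt hk)⟩, Nat.mod_lt _ hm, ?_⟩
  rw [add_comm, ← Nat.sub_sub]
  exact Nat.dvd_sub_mod _

lemma exists_continuous_injective_isFilteredPoly_orbit [TopologicalSpace.MetrizableSpace X]
    [AddCommMonoid Λ] {p k : ℕ} (hp : p.Prime) (hk : 0 < k) (hΛ : ∀ h : Λ, p • h = 0)
    (hT0 : ∀ x, T 0 x = x) (hTadd : ∀ z w x, T (z + w) x = T z (T w x))
    {x₀ : X} (hx₀ : DenseRange fun z => T z x₀)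
    (hdense : Dense (Submodule.span ℂ {ψ : C(X, ℂ) | IsPhasePoly T k ψ} : Set C(X, ℂ))) :
    ∃ u : X → Hpk p k, Continuous u ∧ Function.Injective u ∧
      IsFilteredPoly (HpkFilt p k) fun z => u (T z x₀) := by
  obtain ⟨ℓ, hℓ_le, hℓ_dvd⟩ := exists_fin_succ_le_and_dvd_sub hk (Nat.sub_pos_of_lt hp.one_lt)
  obtain ⟨φ, hφ, hsep⟩ := exists_seq_mem_separating ⟨1, isPhasePoly_one⟩ hdense
  choose v hv_cont hv_sep hv_poly using fun n =>
    (hφ n).exists_Hfactor_code hp hΛ hT0 hTadd hx₀ hℓ_le hℓ_dvd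
  refine ⟨fun x => Pi.single ℓ fun n => v n x, ?_, fun x y hxy => ?_, ?_⟩
  · exact (continuous_single ℓ).comp (continuous_pi hv_cont)
  · have hv : (fun n => v n x) = fun n => v n y := Pi.single_injective ℓ hxy
    exact hsep x y fun n => hv_sep n x y (congrFun hv n)
  · refine isFilteredPoly_HpkFilt_iff.2 fun ℓ' n => ?_
    obtain rfl | hne := eq_or_ne ℓ' ℓ
    · simpa only [Pi.single_eq_same] using hv_poly n
    · simp only [Pi.single_eq_of_ne hne]
      exact isFilteredPoly_zero _

end Conjugacy

theorem transitive_topAbramov_conjugate_orbitClosure_Hpk_general [AddCommGroup Λ] (p k : ℕ)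
    (hp : p.Prime) (hk : 1 ≤ k) (hΛ : ∀ h : Λ, p • h = 0)
    [TopologicalSpace X] [CompactSpace X] [TopologicalSpace.MetrizableSpace X]
    (T : Λ → X → X)
    (hTcont : ∀ z, Continuous (T z))
    (hT0 : ∀ x : X, T 0 x = x)
    (hTadd : ∀ (z w : Λ) (x : X), T (z + w) x = T z (T w x))
    (htrans : ∃ x₀ : X, Dense (Set.range fun z : Λ => T z x₀))
    (habramov : ∀ (h : C(X, ℂ)) (ε : ℝ), 0 < ε →
      ∃ g ∈ Submodule.span ℂ {ψ : C(X, ℂ) | IsPhasePoly T k ⇑ψ},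
        ∀ y, ‖h y - g y‖ < ε) :
    ∃ f : Λ → Hpk p k, IsFilteredPoly (HpkFilt p k) f ∧
      ∃ e : X ≃ₜ (closure (orbit' f) : Set (Λ → Hpk p k)),
        ∀ (z : Λ) (x : X), (e (T z x) : Λ → Hpk p k) = fun w => (e x : Λ → Hpk p k) (w + z) := by
  obtain ⟨x₀, hx₀⟩ := htrans
  obtain ⟨u, hu_cont, hu_inj, hu_poly⟩ := exists_continuous_injective_isFilteredPoly_orbit hp hk hΛ
    hT0 hTadd hx₀ (dense_of_forall_exists_norm_sub_lt habramov)
  have code_injective : Function.Injective fun x (w : Λ) => u (T w x) := fun x y hxy =>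
    hu_inj (by simpa only [hT0] using congrFun hxy 0)
  exact ⟨_, hu_poly, exists_homeomorph_closure_orbit hTcont hTadd hu_cont code_injective hx₀⟩

/-- every transitive topological Abramov system `(X, 𝔽_p^ω)` of order at most
`k` (with `X` compact metrizable) is conjugate, via an equivariant homeomorphism, to the
orbit closure under the shift action of a filtered polynomial map `f : 𝔽_p^ω → H_{p,k}`. -/
theorem transitive_topAbramov_conjugate_orbitClosure_Hpk (p k : ℕ) (hp : p.Prime) (hk : 1 ≤ k)
    [TopologicalSpace X] [CompactSpace X] [TopologicalSpace.MetrizableSpace X]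
    (T : (ℕ →₀ ZMod p) → X → X)
    (hTcont : ∀ z, Continuous (T z))
    (hT0 : ∀ x : X, T 0 x = x)
    (hTadd : ∀ (z w : ℕ →₀ ZMod p) (x : X), T (z + w) x = T z (T w x))
    (htrans : ∃ x₀ : X, Dense (Set.range fun z : ℕ →₀ ZMod p => T z x₀))
    (habramov : ∀ (h : C(X, ℂ)) (ε : ℝ), 0 < ε →
      ∃ g ∈ Submodule.span ℂ {ψ : C(X, ℂ) | IsPhasePoly T k ⇑ψ},
        ∀ y, ‖h y - g y‖ < ε) :
    ∃ f : (ℕ →₀ ZMod p) → Hpk p k, IsFilteredPoly (HpkFilt p k) f ∧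
      ∃ e : X ≃ₜ (closure (orbit' f) : Set ((ℕ →₀ ZMod p) → Hpk p k)),
        ∀ (z : ℕ →₀ ZMod p) (x : X),
          ((e (T z x) : (ℕ →₀ ZMod p) → Hpk p k)) =
            fun w => (e x : (ℕ →₀ ZMod p) → Hpk p k) (w + z) := by
  exact transitive_topAbramov_conjugate_orbitClosure_Hpk_general p k hp hk
    (fun h => by ext; simp) T hTcont hT0 hTadd htrans habramov
end

section
/- Fix a prime p and an integer k ≥ 1. Let ι : 𝔽_p^ω → ⊕_{n∈ℕ} ℤ be the map sending each element of 𝔽_p^ω = ⊕_{n∈ℕ} ℤ/pℤ to its coordinatewise integer representative in {0,1,…,p−1}. If g̃ : ⊕_{n∈ℕ} ℤ → H_{p,k} is a filtered polynomial map with respect to the filtration of H_{p,k}, then g := g̃ ∘ ι : 𝔽_p^ω → H_{p,k} is a filtered polynomial map with respect to the same filtration, where now the difference operators are taken in the group 𝔽_p^ω. (This expresses the p-homogeneity of H_{p,k}.) -/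
variable {Λ G : Type*}

/-- The coordinatewise integer-representative map `ι : 𝔽_p^ω → ⊕_{n∈ℕ} ℤ`, sending each
coordinate `a ∈ ℤ/pℤ` to its representative `a.val ∈ {0, 1, …, p−1}`. -/
noncomputable def iotaRep (p : ℕ) (hp : p ≠ 0) : (ℕ →₀ ZMod p) → (ℕ →₀ ℤ) :=
  Finsupp.mapRange (fun a => ((ZMod.val a : ℕ) : ℤ))
    (by haveI : NeZero p := ⟨hp⟩; simp)

/-!
The iterated difference `∂_{h₁} ⋯ ∂_{hₙ} f (x)` is the value at `∏ (δ_{hⱼ} - 1) * δ_x` of the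
additive extension of `f` to the integral group ring. In `ℤ[𝔽_p^ω]` put `tᵢ = δ_{eᵢ} - 1`. From
`(1 + tᵢ)^p = 1` one gets `tᵢ^p = -p (tᵢ + ⋯)`, so giving `p` weight `p - 1` and each `tᵢ` weight
`1`, every product of `n` augmentation elements is an integer combination of elements `p^a t^s` of
weight at least `n` in which every exponent of `t^s` is less than `p`. For such a reduced monomial
no carry occurs between the representatives `{0, …, p - 1}`, so `t^s` acts on `g̃ ∘ ι` at `0` as
the corresponding iterated difference of `g̃` in `⊕ ℤ`, with value in `G_{(|s|)}`. Finally,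
multiplication by `p` raises the index of the filtration by `p - 1`.
-/

section ReducedSpan

variable {σ R : Type*} [DecidableEq σ] [CommRing R] {p : ℕ} {t : σ → R}

/-- The `n`-th step of the weight filtration of `R` by reduced monomials: the additive span of the
elements `p ^ a * ∏ i ∈ s, t i` of weight `a * (p - 1) + |s| ≥ n`, where the multiset `s` is
reduced, i.e. has all multiplicities less than `p`. -/
def reducedSpan (p : ℕ) (t : σ → R) (n : ℕ) : AddSubgroup R :=
  AddSubgroup.closure {w | ∃ (a : ℕ) (s : Multiset σ), (∀ i, s.count i < p) ∧
    n ≤ a * (p - 1) + s.card ∧ w = p ^ a • (s.map t).prod}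

theorem pow_nsmul_prod_mem_reducedSpan {n a : ℕ} {s : Multiset σ} (hs : ∀ i, s.count i < p)
    (hn : n ≤ a * (p - 1) + s.card) : p ^ a • (s.map t).prod ∈ reducedSpan p t n :=
  AddSubgroup.subset_closure ⟨a, s, hs, hn, rfl⟩

theorem reducedSpan_le_iff {n : ℕ} {K : AddSubgroup R} :
    reducedSpan p t n ≤ K ↔ ∀ (a : ℕ) (s : Multiset σ), (∀ i, s.count i < p) →
      n ≤ a * (p - 1) + s.card → p ^ a • (s.map t).prod ∈ K := by
  refine (AddSubgroup.closure_le K).trans ⟨fun h a s hs hn => h ⟨a, s, hs, hn, rfl⟩, ?_⟩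
  rintro h _ ⟨a, s, hs, hn, rfl⟩
  exact h a s hs hn

theorem reducedSpan_antitone : Antitone (reducedSpan p t) := fun _ _ hmn =>
  reducedSpan_le_iff.2 fun _ _ hs hn => pow_nsmul_prod_mem_reducedSpan hs (hmn.trans hn)

theorem one_mem_reducedSpan_zero (hp : 0 < p) : (1 : R) ∈ reducedSpan p t 0 := by
  simpa using pow_nsmul_prod_mem_reducedSpan (t := t) (a := 0) (s := 0) (by simp [hp])
    (Nat.zero_le _)

theorem pow_prime_eq_of_add_one_pow_eq_one (hp : p.Prime) {u : R} (hu : (u + 1) ^ p = 1) :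
    u ^ p = -(p * ∑ m ∈ Finset.Ioo 0 p, u ^ m * ↑(p.choose m / p)) := by
  have expansion := add_pow_prime_eq' hp u 1
  simp only [hu, one_pow, mul_one] at expansion
  linear_combination -expansion

theorem count_replicate_add_lt {m : ℕ} {i : σ} {s : Multiset σ} (hm : m < p)
    (hs : ∀ j, s.count j < p) (hi : s.count i = 0) (j : σ) :
    (Multiset.replicate m i + s).count j < p := by
  rw [Multiset.count_add, Multiset.count_replicate]
  split_ifs with hij
  · subst hij; omega
  · simpa using hs j

theorem pow_nsmul_pow_prime_mul_prod_mem_reducedSpan (hp : p.Prime) {i : σ}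
    (ht : (t i + 1) ^ p = 1) {n a : ℕ} {s : Multiset σ} (hs : ∀ j, s.count j < p)
    (hi : s.count i = 0) (hn : n ≤ a * (p - 1) + s.card + p) :
    p ^ a • (t i ^ p * (s.map t).prod) ∈ reducedSpan p t n := by
  have expansion : p ^ a • (t i ^ p * (s.map t).prod) = -∑ m ∈ Finset.Ioo 0 p,
      (p.choose m / p) • (p ^ (a + 1) • ((Multiset.replicate m i + s).map t).prod) := by
    rw [pow_prime_eq_of_add_one_pow_eq_one hp ht, neg_mul, smul_neg, Finset.mul_sum,
      Finset.sum_mul, Finset.smul_sum]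
    refine congrArg _ (Finset.sum_congr rfl fun m _ => ?_)
    simp only [nsmul_eq_mul, Multiset.map_add, Multiset.map_replicate, Multiset.prod_add,
      Multiset.prod_replicate]
    push_cast
    ring
  rw [expansion]
  refine neg_mem (sum_mem fun m hm => nsmul_mem (pow_nsmul_prod_mem_reducedSpan ?_ ?_) _)
  · exact count_replicate_add_lt (Finset.mem_Ioo.1 hm).2 hs hi
  · have hm_pos := (Finset.mem_Ioo.1 hm).1
    rw [Multiset.card_add, Multiset.card_replicate, add_mul]
    omega

theorem mul_mem_reducedSpan_succ (hp : p.Prime) {i : σ} (ht : (t i + 1) ^ p = 1) {n : ℕ} {w : R}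
    (hw : w ∈ reducedSpan p t n) : t i * w ∈ reducedSpan p t (n + 1) := by
  suffices h : reducedSpan p t n ≤ (reducedSpan p t (n + 1)).comap (AddMonoidHom.mulLeft (t i)) from
    h hw
  refine reducedSpan_le_iff.2 fun a s hs hn => ?_
  rw [AddSubgroup.mem_comap, AddMonoidHom.coe_mulLeft, mul_smul_comm]
  obtain hlt | hcount : s.count i + 1 < p ∨ s.count i = p - 1 := by have := hs i; omega
  · rw [← Multiset.prod_cons, ← Multiset.map_cons]
    refine pow_nsmul_prod_mem_reducedSpan (fun j => ?_) (by rw [Multiset.card_cons]; omega)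
    obtain rfl | hji := eq_or_ne j i
    · rwa [Multiset.count_cons_self]
    · rw [Multiset.count_cons_of_ne hji]; exact hs j
  · obtain ⟨s, rfl⟩ := Multiset.le_iff_exists_add.1 (Multiset.le_count_iff_replicate_le.1 hcount.ge)
    rw [Multiset.card_add, Multiset.card_replicate] at hn
    rw [Multiset.map_add, Multiset.map_replicate, Multiset.prod_add, Multiset.prod_replicate,
      ← mul_assoc, mul_pow_sub_one hp.ne_zero]
    have hp_pos := hp.pos
    refine pow_nsmul_pow_prime_mul_prod_mem_reducedSpan hp ht (fun j => ?_) (by simpa using hcount)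
      (by omega)
    exact (Multiset.count_le_of_le j (Multiset.le_add_left _ _)).trans_lt (hs j)

/-- The submonoid of those `g` for which multiplication by `g - 1` raises the weight filtration
`reducedSpan p t` by one step. -/
def weightRaising (p : ℕ) (t : σ → R) : Submonoid R where
  carrier := {g | ∀ n, ∀ w ∈ reducedSpan p t n, (g - 1) * w ∈ reducedSpan p t (n + 1)}
  one_mem' n w _ := by simp
  mul_mem' {g g'} hg hg' n w hw := by
    have expansion : (g * g' - 1) * w = (g - 1) * ((g' - 1) * w) + (g - 1) * w + (g' - 1) * w := by
      ring
    rw [expansion]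
    exact add_mem (add_mem (reducedSpan_antitone (Nat.le_succ _) (hg _ _ (hg' _ _ hw)))
      (hg _ _ hw)) (hg' _ _ hw)

theorem mem_reducedSpan_zero_of_mem_weightRaising (hp : 0 < p) {g : R}
    (hg : g ∈ weightRaising p t) : g ∈ reducedSpan p t 0 := by
  have hone := one_mem_reducedSpan_zero (t := t) hp
  simpa using add_mem (reducedSpan_antitone (Nat.zero_le 1) (hg 0 1 hone)) hone

theorem prod_sub_one_mul_mem_reducedSpan {gs : List R} (hgs : ∀ g ∈ gs, g ∈ weightRaising p t)
    {w : R} (hw : w ∈ reducedSpan p t 0) :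
    (gs.map (· - 1)).prod * w ∈ reducedSpan p t gs.length := by
  induction gs with
  | nil => simpa using hw
  | cons g gs ih =>
    rw [List.forall_mem_cons] at hgs
    rw [List.map_cons, List.prod_cons, mul_assoc]
    exact hgs.1 _ _ (ih hgs.2)

end ReducedSpan

section GroupRing

/-- The additive extension of a map `f` to the integral group ring, `∑ c_x δ_x ↦ ∑ c_x f(x)`;
it turns iterated differences of `f` into products of augmentation elements. -/
noncomputable def groupRingExt [AddCommGroup G] (f : Λ → G) : AddMonoidAlgebra ℤ Λ →+ G :=
  ((Finsupp.linearCombination ℤ f).comp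
    (AddMonoidAlgebra.coeffLinearEquiv ℤ).toLinearMap).toAddMonoidHom

theorem groupRingExt_single_one [AddCommGroup G] (f : Λ → G) (x : Λ) :
    groupRingExt f (AddMonoidAlgebra.single x 1) = f x := by
  simp [groupRingExt]

theorem dds_cons_apply [Add Λ] [Sub G] (h : Λ) (hs : List Λ) (f : Λ → G) (x : Λ) :
    dds (h :: hs) f x = dds hs f (x + h) - dds hs f x :=
  rfl

/-- The augmentation element `δ_h - 1` of the integral group ring, which encodes the difference
operator `∂_h`. -/
noncomputable def augmentationElt [AddCommMonoid Λ] (h : Λ) : AddMonoidAlgebra ℤ Λ :=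
  AddMonoidAlgebra.single h 1 - 1

theorem dds_eq_groupRingExt [AddCommMonoid Λ] [AddCommGroup G] (f : Λ → G) (hs : List Λ) (x : Λ) :
    dds hs f x =
      groupRingExt f ((hs.map augmentationElt).prod * AddMonoidAlgebra.single x 1) := by
  induction hs generalizing x with
  | nil => simp [dds, groupRingExt_single_one]
  | cons h hs ih =>
    have single_add : (AddMonoidAlgebra.single (x + h) 1 : AddMonoidAlgebra ℤ Λ) =
        AddMonoidAlgebra.single h 1 * AddMonoidAlgebra.single x 1 := by
      rw [AddMonoidAlgebra.single_mul_single, add_comm, one_mul]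
    rw [dds_cons_apply, ih, ih, ← map_sub, single_add, List.map_cons, List.prod_cons,
      augmentationElt]
    congr 1
    ring

end GroupRing

section ElementaryGroup

variable {σ : Type*} {p : ℕ}

/-- The element `tᵢ = δ_{eᵢ} - 1` of the integral group ring of `⊕_σ ℤ/pℤ`, where `eᵢ` is the
`i`-th standard generator. -/
noncomputable def basisAugmentationElt (p : ℕ) (i : σ) : AddMonoidAlgebra ℤ (σ →₀ ZMod p) :=
  augmentationElt (Finsupp.single i 1)

theorem basisAugmentationElt_add_one_pow (i : σ) :
    (basisAugmentationElt p i + 1) ^ p = 1 := by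
  simp [basisAugmentationElt, augmentationElt, AddMonoidAlgebra.one_def]

theorem single_one_mem_weightRaising [DecidableEq σ] (hp : p.Prime) (h : σ →₀ ZMod p) :
    AddMonoidAlgebra.single h 1 ∈ weightRaising p (basisAugmentationElt p) := by
  have : NeZero p := ⟨hp.ne_zero⟩
  induction h using Finsupp.induction_linear with
  | zero => exact one_mem _
  | add h h' hh hh' => simpa [AddMonoidAlgebra.single_mul_single] using mul_mem hh hh'
  | single i c =>
    have generator_mem : AddMonoidAlgebra.single (Finsupp.single i 1) 1 ∈
        weightRaising p (basisAugmentationElt p) :=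
      fun _ _ hw => mul_mem_reducedSpan_succ hp (basisAugmentationElt_add_one_pow i) hw
    simpa [AddMonoidAlgebra.single_pow] using pow_mem generator_mem c.val

theorem prod_augmentationElt_mul_single_mem_reducedSpan [DecidableEq σ] (hp : p.Prime)
    (hs : List (σ →₀ ZMod p)) (x : σ →₀ ZMod p) :
    (hs.map augmentationElt).prod * AddMonoidAlgebra.single x 1 ∈
      reducedSpan p (basisAugmentationElt p) hs.length := by
  have hx := mem_reducedSpan_zero_of_mem_weightRaising hp.pos (single_one_mem_weightRaising hp x)
  have hgs : ∀ g ∈ hs.map (fun h => AddMonoidAlgebra.single h (1 : ℤ)),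
      g ∈ weightRaising p (basisAugmentationElt p) :=
    List.forall_mem_map.2 fun h _ => single_one_mem_weightRaising hp h
  have hprod := prod_sub_one_mul_mem_reducedSpan hgs hx
  rwa [List.map_map, List.length_map] at hprod

end ElementaryGroup

section IotaRep

variable {p : ℕ}

theorem iotaRep_zero (hp : p ≠ 0) : iotaRep p hp 0 = 0 :=
  Finsupp.mapRange_zero

theorem iotaRep_apply (hp : p ≠ 0) (x : ℕ →₀ ZMod p) (i : ℕ) : iotaRep p hp x i = (x i).val :=
  Finsupp.mapRange_apply

theorem iotaRep_add_single_one (hp : p ≠ 0) {x : ℕ →₀ ZMod p} {i : ℕ}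
    (hi : iotaRep p hp x i + 1 < p) :
    iotaRep p hp (x + Finsupp.single i 1) = iotaRep p hp x + Finsupp.single i 1 := by
  have : NeZero p := ⟨hp⟩
  rw [iotaRep_apply] at hi
  have val_one : (1 : ZMod p).val = 1 := ZMod.val_one'' (by omega)
  ext j
  rw [Finsupp.add_apply, iotaRep_apply, iotaRep_apply, Finsupp.add_apply]
  obtain rfl | hij := eq_or_ne i j
  · have no_carry : (x i + 1).val = (x i).val + 1 := by
      rw [ZMod.val_add_of_lt (by omega), val_one]
    rw [Finsupp.single_eq_same, Finsupp.single_eq_same, no_carry, Nat.cast_succ]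
  · rw [Finsupp.single_eq_of_ne' hij, Finsupp.single_eq_of_ne' hij, add_zero, add_zero]

theorem dds_comp_iotaRep [Sub G] (hp : p ≠ 0) (f : (ℕ →₀ ℤ) → G) (l : List ℕ)
    {x : ℕ →₀ ZMod p} (hl : ∀ i, iotaRep p hp x i + l.count i < p) :
    dds (l.map (Finsupp.single · 1)) (f ∘ iotaRep p hp) x =
      dds (l.map (Finsupp.single · 1)) f (iotaRep p hp x) := by
  induction l generalizing x with
  | nil => rfl
  | cons i l ih =>
    have hi : iotaRep p hp x i + 1 < p := by
      have := hl i
      rw [List.count_cons_self] at this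
      omega
    have hx : ∀ j, iotaRep p hp x j + l.count j < p := fun j => by
      have := hl j
      have := List.count_le_count_cons (a := j) (b := i) (l := l)
      omega
    have hx_shift : ∀ j, iotaRep p hp (x + Finsupp.single i 1) j + l.count j < p := fun j => by
      have := hl j
      rw [iotaRep_add_single_one hp hi, Finsupp.add_apply, Finsupp.single_apply]
      rw [List.count_cons] at this
      grind
    rw [List.map_cons, List.map_cons, dds_cons_apply, dds_cons_apply, ih hx, ih hx_shift,
      iotaRep_add_single_one hp hi]

end IotaRep

section Filtration

variable [AddCommGroup G] {Gf : ℕ → AddSubgroup G} {p : ℕ}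

theorem pow_nsmul_mem_of_nsmul_mem {c d : ℕ} (hc : ∀ i, ∀ x ∈ Gf i, c • x ∈ Gf (i + d)) (a : ℕ)
    {i : ℕ} {x : G} (hx : x ∈ Gf i) : c ^ a • x ∈ Gf (a * d + i) := by
  induction a with
  | zero => simpa using hx
  | succ a ih =>
    rw [pow_succ', mul_smul, Nat.succ_mul, Nat.add_right_comm]
    exact hc _ _ ih

theorem IsFilteredPoly.dds_mem [Add Λ] {f : Λ → G} (hf : IsFilteredPoly Gf f) (hGf : Gf 0 = ⊤)
    (hs : List Λ) (x : Λ) : dds hs f x ∈ Gf hs.length := by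
  obtain rfl | hne := eq_or_ne hs []
  · simp [hGf]
  · exact hf hs hne x

theorem IsFilteredPoly.groupRingExt_prod_basisAugmentationElt_mem {f : (ℕ →₀ ℤ) → G}
    (hf : IsFilteredPoly Gf f) (hGf : Gf 0 = ⊤) (hp : p ≠ 0) {s : Multiset ℕ}
    (hs : ∀ i, s.count i < p) :
    groupRingExt (f ∘ iotaRep p hp) (s.map (basisAugmentationElt p)).prod ∈ Gf s.card := by
  obtain ⟨l, rfl⟩ := Quotient.exists_rep s
  have eq_dds : groupRingExt (f ∘ iotaRep p hp) (l.map (basisAugmentationElt p)).prod =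
      dds (l.map (Finsupp.single · 1)) f 0 := by
    rw [← iotaRep_zero hp, ← dds_comp_iotaRep hp f l (by simpa [iotaRep_zero] using hs),
      dds_eq_groupRingExt, List.map_map, ← AddMonoidAlgebra.one_def, mul_one]
    rfl
  have hmem := hf.dds_mem hGf (l.map (Finsupp.single · 1)) 0
  rw [List.length_map, ← eq_dds] at hmem
  exact hmem

theorem comp_iotaRep_isFilteredPoly_general (hp : p.Prime) (hGf : Gf 0 = ⊤) (hanti : Antitone Gf)
    (hmul : ∀ i, ∀ x ∈ Gf i, p • x ∈ Gf (i + (p - 1))) {f : (ℕ →₀ ℤ) → G}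
    (hf : IsFilteredPoly Gf f) : IsFilteredPoly Gf (f ∘ iotaRep p hp.ne_zero) := by
  intro hs _ x
  have reducedSpan_le : reducedSpan p (basisAugmentationElt p) hs.length ≤
      (Gf hs.length).comap (groupRingExt (f ∘ iotaRep p hp.ne_zero)) := by
    refine reducedSpan_le_iff.2 fun a s hred hweight => ?_
    rw [AddSubgroup.mem_comap, map_nsmul]
    have hmonomial := hf.groupRingExt_prod_basisAugmentationElt_mem hGf hp.ne_zero hred
    exact hanti hweight (pow_nsmul_mem_of_nsmul_mem hmul a hmonomial)
  rw [dds_eq_groupRingExt]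
  exact reducedSpan_le (prod_augmentationElt_mul_single_mem_reducedSpan hp hs x)

end Filtration

section Hpk

variable {p : ℕ} (k : ℕ)

theorem zmultiples_natCast_pow_antitone {R : Type*} [Ring R] (a : ℕ) :
    Antitone fun n : ℕ => AddSubgroup.zmultiples ((a : R) ^ n) := by
  intro m n hmn
  rw [AddSubgroup.zmultiples_le, ← Nat.sub_add_cancel hmn, pow_add, ← Nat.cast_pow, ← nsmul_eq_mul]
  exact nsmul_mem (AddSubgroup.mem_zmultiples _) _

theorem HfactorFilt_eq_zmultiples (hp : 1 < p) (ℓ : Fin k) (i : ℕ) :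
    HfactorFilt p k ℓ i =
      AddSubgroup.zmultiples ((p : Hfactor p k ℓ) ^ ((i - (ℓ.1 + 1)) ⌈/⌉ (p - 1))) := by
  rw [HfactorFilt]
  split_ifs with hi
  · rw [Nat.sub_eq_zero_of_le hi, zero_ceilDiv, pow_zero]
    exact (eq_top_iff.2 fun x _ => AddSubgroup.mem_zmultiples_iff.2 ⟨x.cast, by simp⟩).symm
  · have exponent_eq : (i - (ℓ.1 + 1) - 1) / (p - 1) + 1 = (i - (ℓ.1 + 1)) ⌈/⌉ (p - 1) := by
      rw [Nat.ceilDiv_eq_add_pred_div, ← Nat.add_div_right _ (by omega)]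
      congr 1
      omega
    exact congrArg (fun e => AddSubgroup.zmultiples ((p : Hfactor p k ℓ) ^ e)) exponent_eq

theorem HfactorFilt_antitone (hp : 1 < p) (ℓ : Fin k) : Antitone (HfactorFilt p k ℓ) := by
  intro i j hij
  rw [HfactorFilt_eq_zmultiples k hp, HfactorFilt_eq_zmultiples k hp]
  refine zmultiples_natCast_pow_antitone p ((gc_smul_ceilDiv ?_).monotone_l ?_) <;> omega

theorem nsmul_mem_HfactorFilt (hp : 1 < p) {ℓ : Fin k} {i : ℕ} {x : Hfactor p k ℓ}
    (hx : x ∈ HfactorFilt p k ℓ i) : p • x ∈ HfactorFilt p k ℓ (i + (p - 1)) := by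
  rw [HfactorFilt_eq_zmultiples k hp] at hx ⊢
  have exponent_le : (i + (p - 1) - (ℓ.1 + 1)) ⌈/⌉ (p - 1) ≤
      (i - (ℓ.1 + 1)) ⌈/⌉ (p - 1) + 1 := by
    have := le_smul_ceilDiv (a := p - 1) (b := i - (ℓ.1 + 1)) (by omega)
    rw [ceilDiv_le_iff_le_smul (by omega), smul_add, smul_eq_mul, smul_eq_mul, mul_one]
    rw [smul_eq_mul] at this
    omega
  refine zmultiples_natCast_pow_antitone p exponent_le ?_
  obtain ⟨c, rfl⟩ := hx
  exact ⟨c, by simp [pow_succ', mul_left_comm]⟩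

theorem HpkFilt_zero : HpkFilt p k 0 = ⊤ := by
  simp [HpkFilt, HfactorFilt, AddSubgroup.pi_top]

theorem HpkFilt_antitone (hp : 1 < p) : Antitone (HpkFilt p k) :=
  fun _ _ hij _ hx ℓ hℓ n hn => HfactorFilt_antitone k hp ℓ hij (hx ℓ hℓ n hn)

theorem nsmul_mem_HpkFilt (hp : 1 < p) (i : ℕ) :
    ∀ x ∈ HpkFilt p k i, p • x ∈ HpkFilt p k (i + (p - 1)) :=
  fun _ hx ℓ hℓ n hn => nsmul_mem_HfactorFilt k hp (hx ℓ hℓ n hn)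

end Hpk

/-- `p`-homogeneity of `H_{p,k}`: if `g̃ : ⊕_{n∈ℕ} ℤ → H_{p,k}` is a filtered
polynomial with respect to the filtration of `H_{p,k}`, then `g̃ ∘ ι : 𝔽_p^ω → H_{p,k}` is
also a filtered polynomial with respect to the same filtration, where the difference
operators are now taken in the group `𝔽_p^ω`. -/
theorem comp_iotaRep_isFilteredPoly (p k : ℕ) (hp : p.Prime) (hk : 1 ≤ k)
    (gt : (ℕ →₀ ℤ) → Hpk p k) (hgt : IsFilteredPoly (HpkFilt p k) gt) :
    IsFilteredPoly (HpkFilt p k) (gt ∘ iotaRep p hp.ne_zero) :=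
  comp_iotaRep_isFilteredPoly_general hp (HpkFilt_zero k) (HpkFilt_antitone k hp.one_lt)
    (nsmul_mem_HpkFilt k hp.one_lt) hgt
end
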